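/- arXiv:1111.4728 — 4 statements merged into one kernel-verified Lean document; each statement's English description precedes it below -/
import Mathlib

section
/- Fix an integer d ≥ 1, a viscosity parameter ϰ > 0, and a constant c > 0. Let φ: ℝ^d → ℝ be measurable with L := sup_{x ∈ ℝ^d} e^{c‖x‖}|φ(x)| < ∞. Then for every t > 0 and every x ∈ ℝ^d, e^{−8c²ϰt + c‖x‖} · |(p_t * φ)(x)| ≤ 2^{d/2} · L. -/
open MeasureTheory Real

/-- The heat kernel for `(ϰ/2)Δ` on `ℝ^d`. -/
noncomputable def heatKernel (d : ℕ) (ϰ : ℝ) (t : ℝ) (z : EuclideanSpace ℝ (Fin d)) : ℝ :=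
  (2 * π * ϰ * t) ^ (-(d : ℝ) / 2) * Real.exp (-‖z‖ ^ 2 / (2 * ϰ * t))

/-- If `φ` is measurable with `e^{c‖x‖}|φ(x)| ≤ L` for all `x`, then for
all `t > 0` and `x ∈ ℝ^d`, `e^{-8c²ϰt + c‖x‖}|(p_t*φ)(x)| ≤ 2^{d/2} L`. -/
theorem stmt1 (d : ℕ) (hd : 1 ≤ d) (ϰ c : ℝ) (hϰ : 0 < ϰ) (hc : 0 < c)
    (φ : EuclideanSpace ℝ (Fin d) → ℝ) (hφ : Measurable φ)
    (L : ℝ) (hL : ∀ x, Real.exp (c * ‖x‖) * |φ x| ≤ L)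
    (t : ℝ) (ht : 0 < t) (x : EuclideanSpace ℝ (Fin d)) :
    Real.exp (-(8 * c ^ 2 * ϰ * t) + c * ‖x‖) *
      |∫ y, heatKernel d ϰ t (x - y) * φ y| ≤ 2 ^ ((d : ℝ) / 2) * L := by
  have hs : 0 < ϰ * t := mul_pos hϰ ht
  have hb : 0 < 1 / (4 * (ϰ * t)) := by positivity
  have hL0 : 0 ≤ L := le_trans (by positivity) (hL 0)
  have hG := GaussianFourier.integral_rexp_neg_mul_sq_norm (V := EuclideanSpace ℝ (Fin d)) hb
  rw [finrank_euclideanSpace_fin] at hG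
  have hI : Integrable (fun v : EuclideanSpace ℝ (Fin d) =>
      Real.exp (-(1 / (4 * (ϰ * t))) * ‖v‖ ^ 2)) := by
    apply Integrable.of_integral_ne_zero
    rw [hG]
    positivity
  set A : ℝ := (2 * π * ϰ * t) ^ (-(d : ℝ) / 2) with hA
  have hA0 : 0 ≤ A := by positivity
  set K : ℝ := A * (Real.exp (8 * c ^ 2 * ϰ * t - c * ‖x‖) * L) with hK
  have hpt : ∀ y, ‖heatKernel d ϰ t (x - y) * φ y‖ ≤
      K * Real.exp (-(1 / (4 * (ϰ * t))) * ‖x - y‖ ^ 2) := by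
    intro y
    have h1 : |φ y| ≤ Real.exp (-(c * ‖y‖)) * L := by
      have := mul_le_mul_of_nonneg_left (hL y) (Real.exp_pos (-(c * ‖y‖))).le
      rwa [← mul_assoc, ← Real.exp_add, neg_add_cancel, Real.exp_zero, one_mul] at this
    have h2 : -‖x - y‖ ^ 2 / (2 * ϰ * t) + -(c * ‖y‖) ≤
        (8 * c ^ 2 * ϰ * t - c * ‖x‖) + -(1 / (4 * (ϰ * t))) * ‖x - y‖ ^ 2 := by
      have h3 : c * ‖x‖ ≤ c * ‖x - y‖ + c * ‖y‖ := by
        rw [← mul_add]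
        exact mul_le_mul_of_nonneg_left (by simpa using norm_add_le (x - y) y) hc.le
      have h4 : c * ‖x - y‖ ≤ ‖x - y‖ ^ 2 / (4 * (ϰ * t)) + c ^ 2 * (ϰ * t) := by
        have : ‖x - y‖ ^ 2 / (4 * (ϰ * t)) + c ^ 2 * (ϰ * t) - c * ‖x - y‖
          = (‖x - y‖ - 2 * (ϰ * t) * c) ^ 2 / (4 * (ϰ * t)) := by
          field_simp
          ring
        have h5 : 0 ≤ (‖x - y‖ - 2 * (ϰ * t) * c) ^ 2 / (4 * (ϰ * t)) := by positivity
        linarith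
      have h6 : -‖x - y‖ ^ 2 / (2 * ϰ * t) = -2 * (‖x - y‖ ^ 2 / (4 * (ϰ * t))) := by
        field_simp
        ring
      have h7 : -(1 / (4 * (ϰ * t))) * ‖x - y‖ ^ 2 = - (‖x - y‖ ^ 2 / (4 * (ϰ * t))) := by
        field_simp
      have h8 : 0 ≤ c ^ 2 * (ϰ * t) := by positivity
      rw [h6, h7]
      linarith
    unfold heatKernel
    rw [← hA, Real.norm_eq_abs, abs_mul, abs_mul, abs_of_nonneg hA0, Real.abs_exp]
    calc A * Real.exp (-‖x - y‖ ^ 2 / (2 * ϰ * t)) * |φ y|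
        ≤ A * Real.exp (-‖x - y‖ ^ 2 / (2 * ϰ * t)) * (Real.exp (-(c * ‖y‖)) * L) := by gcongr
      _ = A * (Real.exp (-‖x - y‖ ^ 2 / (2 * ϰ * t) + -(c * ‖y‖)) * L) := by
          rw [Real.exp_add]; ring
      _ ≤ A * (Real.exp ((8 * c ^ 2 * ϰ * t - c * ‖x‖)
            + -(1 / (4 * (ϰ * t))) * ‖x - y‖ ^ 2) * L) := by gcongr
      _ = _ := by rw [hK, Real.exp_add]; ring
  have hint := norm_integral_le_of_norm_le ((hI.comp_sub_left x).const_mul K)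
    (Filter.Eventually.of_forall hpt)
  rw [integral_const_mul, integral_sub_left_eq_self
    (fun v : EuclideanSpace ℝ (Fin d) => Real.exp (-(1 / (4 * (ϰ * t))) * ‖v‖ ^ 2)) volume x,
    hG, Real.norm_eq_abs] at hint
  have hAG : A * (π / (1 / (4 * (ϰ * t)))) ^ ((d : ℝ) / 2) = 2 ^ ((d : ℝ) / 2) := by
    have e : π / (1 / (4 * (ϰ * t))) = 2 * (2 * π * ϰ * t) := by
      field_simp
      ring
    have hp : 0 < 2 * π * ϰ * t := by positivity
    rw [e, Real.mul_rpow (by norm_num) hp.le, hA, mul_left_comm, ← Real.rpow_add hp]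
    rw [show -(d : ℝ) / 2 + (d : ℝ) / 2 = 0 by ring, Real.rpow_zero, mul_one]
  calc _ ≤ Real.exp (-(8 * c ^ 2 * ϰ * t) + c * ‖x‖) *
        (K * (π / (1 / (4 * (ϰ * t)))) ^ ((d : ℝ) / 2)) := by gcongr
    _ = (Real.exp (-(8 * c ^ 2 * ϰ * t) + c * ‖x‖) * Real.exp (8 * c ^ 2 * ϰ * t - c * ‖x‖)) *
        ((A * (π / (1 / (4 * (ϰ * t)))) ^ ((d : ℝ) / 2)) * L) := by rw [hK]; ring
    _ = _ := by
      rw [hAG, ← Real.exp_add]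
      rw [show -(8 * c ^ 2 * ϰ * t) + c * ‖x‖ + (8 * c ^ 2 * ϰ * t - c * ‖x‖) = 0 by ring,
        Real.exp_zero, one_mul]
end

section
/- Fix ϰ > 0 and let p_s(y) := (2πϰs)^{-1/2} · exp(−y²/(2ϰs)) be the one-dimensional heat kernel. Then for all s > 0 and x ∈ ℝ, ∫_{−∞}^{∞} |p_s(y − x) − p_s(y)| dy ≤ √(2/(πϰs)) · |x|. -/
open MeasureTheory Real

/-- The one-dimensional heat kernel with viscosity `ϰ`. -/
noncomputable def heatKernel1 (ϰ : ℝ) (s : ℝ) (y : ℝ) : ℝ :=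
  (2 * π * ϰ * s) ^ (-(1 : ℝ) / 2) * Real.exp (-y ^ 2 / (2 * ϰ * s))

lemma hk_aux (f : ℝ → ℝ) (M : ℝ) (hf : Integrable f) (hM : ∀ y, |f y| ≤ M)
    (hmono : ∀ y z, |y| ≤ |z| → f z ≤ f y) (x : ℝ) (hx : 0 ≤ x) :
    ∫ y : ℝ, |f (y - x) - f y| ≤ 2 * M * x := by
  have hfx : Integrable (fun y => f (y - x)) := hf.comp_sub_right x
  have hpre : ∀ S : Set ℝ, ∫ y in (fun y => y - x) ⁻¹' S, f (y - x) = ∫ y in S, f y := fun S =>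
    (measurePreserving_sub_right volume x).setIntegral_preimage_emb
      (MeasurableEquiv.subRight x).measurableEmbedding f S
  have p1 : (fun y => y - x) ⁻¹' Set.Ioi (-(x/2)) = Set.Ioi (x/2) := by
    ext y; simp only [Set.mem_preimage, Set.mem_Ioi]; constructor <;> intro h <;> linarith
  have p2 : (fun y => y - x) ⁻¹' Set.Iic (-(x/2)) = Set.Iic (x/2) := by
    ext y; simp only [Set.mem_preimage, Set.mem_Iic]; constructor <;> intro h <;> linarith
  have e1 := hpre (Set.Ioi (-(x/2)))
  have e2 := hpre (Set.Iic (-(x/2)))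
  rw [p1] at e1
  rw [p2] at e2
  have hint : Integrable (fun y => |f (y - x) - f y|) := (hfx.sub hf).abs
  have hA : ∫ y in Set.Ioi (x/2), |f (y - x) - f y| = ∫ y in (-(x/2))..(x/2), f y := by
    rw [← intervalIntegral.integral_Ioi_sub_Ioi' hf.integrableOn hf.integrableOn, ← e1,
      ← integral_sub hfx.integrableOn hf.integrableOn]
    refine setIntegral_congr_fun measurableSet_Ioi fun y hy => ?_
    have hy' : x / 2 < y := hy
    refine abs_of_nonneg (sub_nonneg.2 (hmono _ _ ?_))
    rw [abs_of_nonneg (by linarith : 0 ≤ y), abs_le]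
    constructor <;> linarith
  have hB : ∫ y in Set.Iic (x/2), |f (y - x) - f y| = ∫ y in (-(x/2))..(x/2), f y := by
    rw [← intervalIntegral.integral_Iic_sub_Iic hf.integrableOn hf.integrableOn, ← e2,
      ← integral_sub hf.integrableOn hfx.integrableOn]
    refine setIntegral_congr_fun measurableSet_Iic fun y hy => ?_
    have hy' : y ≤ x / 2 := hy
    rw [abs_sub_comm]
    refine abs_of_nonneg (sub_nonneg.2 (hmono _ _ ?_))
    rw [abs_of_nonpos (by linarith : y - x ≤ 0), abs_le]
    constructor <;> linarith
  have hC : ∫ y in (-(x/2))..(x/2), f y ≤ M * x := by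
    have := intervalIntegral.norm_integral_le_of_norm_le_const
      (a := -(x/2)) (b := x/2) (f := f) (C := M) (fun y _ => hM y)
    rw [show x / 2 - -(x/2) = x by ring, abs_of_nonneg hx] at this
    exact (le_abs_self _).trans this
  rw [← integral_add_compl measurableSet_Iic hint (s := Set.Iic (x/2)), Set.compl_Iic, hA, hB]
  linarith

/-- For all `s > 0` and `x ∈ ℝ`,
`∫ |p_s(y-x) - p_s(y)| dy ≤ √(2/(πϰs)) |x|`. -/
theorem stmt3 (ϰ : ℝ) (hϰ : 0 < ϰ) (s : ℝ) (hs : 0 < s) (x : ℝ) :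
    ∫ y : ℝ, |heatKernel1 ϰ s (y - x) - heatKernel1 ϰ s y| ≤
      Real.sqrt (2 / (π * ϰ * s)) * |x| := by
  have hq : 0 < π * ϰ * s := by positivity
  have hks : 0 < ϰ * s := by positivity
  set c : ℝ := (2 * π * ϰ * s) ^ (-(1 : ℝ) / 2) with hc
  have hc0 : 0 ≤ c := by positivity
  have hcv : Real.sqrt (2 / (π * ϰ * s)) = 2 * c := by
    rw [Real.sqrt_eq_iff_mul_self_eq (by positivity) (by positivity)]
    have : c * c = (2 * π * ϰ * s)⁻¹ := by
      rw [hc, ← Real.rpow_add (by positivity), ← Real.rpow_neg_one]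
      norm_num
    rw [show 2 * c * (2 * c) = 4 * (c * c) by ring, this]
    field_simp
    norm_num
  have hf : Integrable (heatKernel1 ϰ s) := by
    have := (integrable_exp_neg_mul_sq (b := 1 / (2 * ϰ * s)) (by positivity)).const_mul c
    refine this.congr (Filter.Eventually.of_forall fun y => ?_)
    simp only [heatKernel1, ← hc]
    congr 2
    ring
  have hmono : ∀ y z, |y| ≤ |z| → heatKernel1 ϰ s z ≤ heatKernel1 ϰ s y := by
    intro y z h
    have h2 := sq_le_sq.2 h
    unfold heatKernel1
    gcongr
  have hM : ∀ y, |heatKernel1 ϰ s y| ≤ c := by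
    intro y
    rw [abs_of_nonneg (by unfold heatKernel1; positivity)]
    have := hmono 0 y (by simp)
    simpa [heatKernel1, ← hc] using this
  rw [hcv]
  rcases le_total 0 x with h | h
  · rw [abs_of_nonneg h]
    exact hk_aux _ c hf hM hmono x h
  · rw [abs_of_nonpos h]
    refine le_trans (le_of_eq ?_) (hk_aux _ c hf hM hmono (-x) (by linarith))
    rw [← integral_sub_right_eq_self (fun y => |heatKernel1 ϰ s (y - x) - heatKernel1 ϰ s y|) (-x)]
    congr 1
    ext y
    rw [abs_sub_comm]
    congr 3
    ring
end

section
/- Fix an integer d ≥ 1, a viscosity parameter ϰ > 0, and β > 0; set c := √(β/(8ϰ)) and Q_s(a) := e^{−βs/2 + c‖a‖} · p_s(a) for s > 0 and a ∈ ℝ^d. Then (Q_s * Q_s)(a) ≤ 2^d · p_{4s}(a) for all s > 0 and a ∈ ℝ^d, and consequently, for every measurable f: ℝ^d → [0,∞], ∫_0^∞ e^{−βs} (Q_s * Q_s * f)(0) ds ≤ 2^{d−2} · ∫_0^∞ e^{−βt/4} (p_t * f)(0) dt. -/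
open MeasureTheory Real
open scoped ENNReal

/-- `Q_s(a) = e^{-βs/2 + √(β/(8ϰ))‖a‖} p_s(a)`. -/
noncomputable def Qker (d : ℕ) (ϰ β : ℝ) (s : ℝ) (a : EuclideanSpace ℝ (Fin d)) : ℝ :=
  Real.exp (-(β * s) / 2 + Real.sqrt (β / (8 * ϰ)) * ‖a‖) * heatKernel d ϰ s a

theorem Qker_le (d : ℕ) (ϰ β : ℝ) (hϰ : 0 < ϰ) (hβ : 0 < β) (s : ℝ) (hs : 0 < s)
    (a : EuclideanSpace ℝ (Fin d)) :
    Qker d ϰ β s a ≤ (2 * π * ϰ * s) ^ (-(d : ℝ) / 2) * Real.exp (-‖a‖ ^ 2 / (4 * ϰ * s)) := by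
  unfold Qker heatKernel
  rw [mul_left_comm, ← Real.exp_add]
  refine mul_le_mul_of_nonneg_left (Real.exp_le_exp.2 ?_) (by positivity)
  set c := Real.sqrt (β / (8 * ϰ)) with hc
  have hc2 : c ^ 2 = β / (8 * ϰ) := Real.sq_sqrt (by positivity)
  have hb : β = 8 * ϰ * c ^ 2 := by rw [hc2]; field_simp
  have key : -‖a‖ ^ 2 / (4 * ϰ * s) - (-(β * s) / 2 + c * ‖a‖ + -‖a‖ ^ 2 / (2 * ϰ * s))
      = (‖a‖ - 2 * ϰ * s * c) ^ 2 / (4 * ϰ * s) + 3 * ϰ * c ^ 2 * s := by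
    rw [hb]; field_simp; ring
  have : 0 ≤ (‖a‖ - 2 * ϰ * s * c) ^ 2 / (4 * ϰ * s) + 3 * ϰ * c ^ 2 * s := by positivity
  linarith

theorem Qker_nonneg (d : ℕ) (ϰ β : ℝ) (hϰ : 0 < ϰ) (s : ℝ) (hs : 0 < s)
    (a : EuclideanSpace ℝ (Fin d)) : 0 ≤ Qker d ϰ β s a := by
  unfold Qker heatKernel
  positivity

theorem Qker_conv_le (d : ℕ) (ϰ β : ℝ) (hϰ : 0 < ϰ) (hβ : 0 < β) (s : ℝ) (hs : 0 < s)
    (a : EuclideanSpace ℝ (Fin d)) :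
    (∫ y, Qker d ϰ β s (a - y) * Qker d ϰ β s y) ≤ 2 ^ (d : ℝ) * heatKernel d ϰ (4 * s) a := by
  set A : ℝ := (2 * π * ϰ * s) ^ (-(d : ℝ) / 2) with hA
  have hApos : 0 < A := by positivity
  set b : ℝ := 1 / (2 * ϰ * s) with hb
  have hbpos : 0 < b := by positivity
  set E : ℝ := Real.exp (-‖a‖ ^ 2 / (8 * ϰ * s)) with hE
  have hG : ∫ v : EuclideanSpace ℝ (Fin d), rexp (-b * ‖v‖ ^ 2) = (2 * π * ϰ * s) ^ ((d : ℝ) / 2) := by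
    rw [GaussianFourier.integral_rexp_neg_mul_sq_norm hbpos, finrank_euclideanSpace_fin]
    congr 1
    rw [hb]; field_simp
  have hGi : Integrable (fun v : EuclideanSpace ℝ (Fin d) => rexp (-b * ‖v‖ ^ 2)) :=
    .of_integral_ne_zero (by rw [hG]; positivity)
  have hbound : ∀ y, Qker d ϰ β s (a - y) * Qker d ϰ β s y ≤
      (A * A * E) * rexp (-b * ‖y - (1 / 2 : ℝ) • a‖ ^ 2) := by
    intro y
    refine (mul_le_mul (Qker_le d ϰ β hϰ hβ s hs _) (Qker_le d ϰ β hϰ hβ s hs _)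
      (Qker_nonneg d ϰ β hϰ s hs _) (by positivity)).trans (le_of_eq ?_)
    rw [← hA]
    have : Real.exp (-‖a - y‖ ^ 2 / (4 * ϰ * s)) * Real.exp (-‖y‖ ^ 2 / (4 * ϰ * s)) =
        E * rexp (-b * ‖y - (1 / 2 : ℝ) • a‖ ^ 2) := by
      rw [hE, ← Real.exp_add, ← Real.exp_add, norm_sub_sq_real, norm_sub_sq_real, norm_smul,
        real_inner_smul_right, real_inner_comm a y, hb]
      congr 1
      simp only [norm_div, norm_one, Real.norm_ofNat]
      field_simp
      ring
    calc _ = A * A * (Real.exp (-‖a - y‖ ^ 2 / (4 * ϰ * s)) * Real.exp (-‖y‖ ^ 2 / (4 * ϰ * s))) := by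
          ring
      _ = _ := by rw [this]; ring
  calc (∫ y, Qker d ϰ β s (a - y) * Qker d ϰ β s y)
      ≤ ∫ y, (A * A * E) * rexp (-b * ‖y - (1 / 2 : ℝ) • a‖ ^ 2) := by
        refine integral_mono_of_nonneg (.of_forall fun y => ?_) ?_ (.of_forall hbound)
        · exact mul_nonneg (Qker_nonneg d ϰ β hϰ s hs _) (Qker_nonneg d ϰ β hϰ s hs _)
        · exact (hGi.comp_sub_right ((1 / 2 : ℝ) • a)).const_mul _
    _ = A * A * E * (2 * π * ϰ * s) ^ ((d : ℝ) / 2) := by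
        rw [integral_const_mul,
          integral_sub_right_eq_self (fun v : EuclideanSpace ℝ (Fin d) => rexp (-b * ‖v‖ ^ 2)), hG]
    _ = A * E := by
        have : A * (2 * π * ϰ * s) ^ ((d : ℝ) / 2) = 1 := by
          rw [hA, ← Real.rpow_add (by positivity)]
          ring_nf
          simp
        linear_combination (A * E) * this
    _ = 2 ^ (d : ℝ) * heatKernel d ϰ (4 * s) a := by
        unfold heatKernel
        have h1 : (2 * π * ϰ * (4 * s)) = 2 ^ (2 : ℝ) * (2 * π * ϰ * s) := by
          norm_num; ring
        have h2 : 2 * ϰ * (4 * s) = 8 * ϰ * s := by ring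
        rw [h2, h1, Real.mul_rpow (by positivity) (by positivity), ← Real.rpow_mul (by norm_num),
          ← hA, ← hE, ← mul_assoc, ← mul_assoc, ← Real.rpow_add (by norm_num)]
        have : (d : ℝ) + 2 * (-(d : ℝ) / 2) = 0 := by ring
        rw [this]; simp

/-- `(Q_s*Q_s)(a) ≤ 2^d p_{4s}(a)` for all `s > 0`, `a ∈ ℝ^d`; consequently,
for every measurable `f : ℝ^d → [0,∞]`,
`∫_0^∞ e^{-βs} (Q_s*Q_s*f)(0) ds ≤ 2^{d-2} ∫_0^∞ e^{-βt/4} (p_t*f)(0) dt`. -/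
theorem stmt8 (d : ℕ) (hd : 1 ≤ d) (ϰ β : ℝ) (hϰ : 0 < ϰ) (hβ : 0 < β) :
    (∀ s > (0:ℝ), ∀ a : EuclideanSpace ℝ (Fin d),
      (∫ y, Qker d ϰ β s (a - y) * Qker d ϰ β s y) ≤
        2 ^ (d : ℝ) * heatKernel d ϰ (4 * s) a) ∧
    ∀ f : EuclideanSpace ℝ (Fin d) → ℝ≥0∞, Measurable f →
      (∫⁻ s in Set.Ioi (0:ℝ), ENNReal.ofReal (Real.exp (-(β * s))) *
          ∫⁻ z, ENNReal.ofReal (∫ y, Qker d ϰ β s (-z - y) * Qker d ϰ β s y) * f z) ≤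
        ENNReal.ofReal (2 ^ ((d : ℝ) - 2)) *
          ∫⁻ t in Set.Ioi (0:ℝ), ENNReal.ofReal (Real.exp (-(β * t) / 4)) *
            ∫⁻ x, ENNReal.ofReal (heatKernel d ϰ t (-x)) * f x := by
  have H := fun s (hs : 0 < s) a => Qker_conv_le d ϰ β hϰ hβ s hs a
  refine ⟨H, fun f hf => ?_⟩
  have himg : (fun s : ℝ => 4 * s) '' Set.Ioi 0 = Set.Ioi 0 := by
    ext x
    simp only [Set.mem_image, Set.mem_Ioi]
    constructor
    · rintro ⟨y, hy, rfl⟩; positivity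
    · intro hx; exact ⟨x / 4, by positivity, by ring⟩
  have hcv := lintegral_image_eq_lintegral_abs_deriv_mul (s := Set.Ioi (0:ℝ))
    (f := fun s : ℝ => 4 * s) (f' := fun _ => 4) measurableSet_Ioi
    (fun x _ => by simpa using ((hasDerivAt_id x).const_mul (4:ℝ)).hasDerivWithinAt)
    (fun x _ y _ h => by simpa using h)
    (fun t => ENNReal.ofReal (Real.exp (-(β * t) / 4)) *
            ∫⁻ x, ENNReal.ofReal (heatKernel d ϰ t (-x)) * f x)
  rw [himg] at hcv
  rw [hcv, ← lintegral_const_mul' _ _ ENNReal.ofReal_ne_top]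
  refine setLIntegral_mono' measurableSet_Ioi fun s hs => ?_
  have hs : 0 < s := hs
  have h4 : ENNReal.ofReal (2 ^ ((d : ℝ) - 2)) * ENNReal.ofReal |(4:ℝ)| =
      ENNReal.ofReal (2 ^ (d : ℝ)) := by
    rw [← ENNReal.ofReal_mul (by positivity), Real.rpow_sub (by norm_num)]
    congr 1
    norm_num
  have he : -(β * (4 * s)) / 4 = -(β * s) := by ring
  rw [← mul_assoc, h4, he, mul_left_comm]
  gcongr
  rw [← lintegral_const_mul' _ _ ENNReal.ofReal_ne_top]
  refine lintegral_mono fun z => ?_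
  simp only []
  rw [← mul_assoc, ← ENNReal.ofReal_mul (by positivity)]
  gcongr
  exact H s hs (-z)
end

section
/- Fix an integer d ≥ 1, α ∈ (0, d), and a viscosity parameter ϰ > 0. There exists a constant C = C(d, α) < ∞ such that for all r > 0 and all x, y ∈ ℝ^d, ∫_{ℝ^d} ∫_{ℝ^d} |p_r(w − x) − p_r(w − y)| · |p_r(z − x) − p_r(z − y)| · ‖w − z‖^{−α} dw dz ≤ C · (ϰr)^{−α/2} · min( 1 , ‖x − y‖/√(ϰr) ). -/
open MeasureTheory Real
open scoped ENNReal

theorem aux_hk (d : ℕ) (ϰ r : ℝ) (z : EuclideanSpace ℝ (Fin d)) :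
    heatKernel d ϰ r z = (2 * π * (ϰ * r)) ^ (-(d : ℝ) / 2) *
      Real.exp (-(1 / (2 * (ϰ * r))) * ‖z‖ ^ 2) := by
  unfold heatKernel
  congr 2
  · ring
  · rw [← mul_assoc]; ring

theorem aux_gauss (d : ℕ) (b : ℝ) (hb : 0 < b) (x : EuclideanSpace ℝ (Fin d)) :
    ∫⁻ z, ENNReal.ofReal (Real.exp (-b * ‖z - x‖ ^ 2)) =
      ENNReal.ofReal ((π / b) ^ ((d : ℝ) / 2)) := by
  rw [lintegral_sub_right_eq_self
    (fun z : EuclideanSpace ℝ (Fin d) => ENNReal.ofReal (Real.exp (-b * ‖z‖ ^ 2))) x]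
  have h := GaussianFourier.integral_rexp_neg_mul_sq_norm (V := EuclideanSpace ℝ (Fin d)) hb
  rw [finrank_euclideanSpace_fin] at h
  have hpos : 0 < (π / b) ^ ((d : ℝ) / 2) := by positivity
  have hi : Integrable (fun v : EuclideanSpace ℝ (Fin d) => Real.exp (-b * ‖v‖ ^ 2)) := by
    by_contra hn
    rw [integral_undef hn] at h
    exact hpos.ne h
  rw [← h, ofReal_integral_eq_lintegral_ofReal hi (Filter.Eventually.of_forall fun v => by positivity)]

theorem aux_prob (d : ℕ) (s : ℝ) (hs : 0 < s) (x : EuclideanSpace ℝ (Fin d)) :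
    ∫⁻ z, ENNReal.ofReal ((2 * π * s) ^ (-(d : ℝ) / 2) *
      Real.exp (-(1 / (2 * s)) * ‖z - x‖ ^ 2)) = 1 := by
  simp_rw [ENNReal.ofReal_mul (show 0 ≤ (2 * π * s) ^ (-(d : ℝ) / 2) by positivity)]
  rw [lintegral_const_mul' _ _ ENNReal.ofReal_ne_top, aux_gauss d _ (by positivity),
    ← ENNReal.ofReal_mul (by positivity), ← ENNReal.ofReal_one]
  congr 1
  rw [show π / (1 / (2 * s)) = 2 * π * s by field_simp, ← Real.rpow_add (by positivity)]
  rw [show -(d : ℝ) / 2 + d / 2 = 0 by ring, Real.rpow_zero]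

theorem aux_riesz (d : ℕ) (hd : 1 ≤ d) (α : ℝ) (hα : α < d) :
    ∃ K : ℝ, 0 < K ∧ ∀ R > (0:ℝ),
      ∫⁻ u in Metric.ball (0 : EuclideanSpace ℝ (Fin d)) R, ENNReal.ofReal (‖u‖ ^ (-α)) ≤
        ENNReal.ofReal (K * R ^ ((d : ℝ) - α)) := by
  have : Nonempty (Fin d) := ⟨⟨0, hd⟩⟩
  set V := (volume : Measure (EuclideanSpace ℝ (Fin d))).real (Metric.ball 0 1) with hV
  have hV0 : 0 ≤ V := measureReal_nonneg
  have hda : 0 < (d : ℝ) - α := by linarith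
  refine ⟨d * V / (d - α) + 1, by positivity, fun R hR => ?_⟩
  have key : ∀ y ∈ Set.Ioo 0 R, y ^ (d - 1) • y ^ (-α) = y ^ ((d : ℝ) - 1 - α) := by
    intro y hy
    rw [smul_eq_mul, ← Real.rpow_natCast, ← Real.rpow_add hy.1, Nat.cast_sub hd]
    congr 1
    push_cast; ring
  have hii : IntegrableOn (fun y : ℝ => y ^ ((d : ℝ) - 1 - α)) (Set.Ioo 0 R) := by
    have := intervalIntegral.intervalIntegrable_rpow' (a := 0) (b := R) (r := (d : ℝ) - 1 - α)
      (by linarith)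
    rw [intervalIntegrable_iff_integrableOn_Ioo_of_le hR.le] at this
    exact this
  have hint : IntegrableOn (fun u : EuclideanSpace ℝ (Fin d) => ‖u‖ ^ (-α))
      (Metric.ball 0 R) := by
    rw [integrableOn_fun_norm_addHaar volume (f := fun t : ℝ => t ^ (-α)),
      finrank_euclideanSpace_fin, integrableOn_congr_fun key measurableSet_Ioo]
    exact hii
  rw [← ofReal_integral_eq_lintegral_ofReal hint
    (Filter.Eventually.of_forall fun v => by positivity)]
  apply ENNReal.ofReal_le_ofReal
  rw [← integral_indicator measurableSet_ball]
  have e1 : (Metric.ball (0 : EuclideanSpace ℝ (Fin d)) R).indicator (fun u => ‖u‖ ^ (-α)) =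
      fun u => (Set.Iio R).indicator (fun t : ℝ => t ^ (-α)) ‖u‖ := by
    ext u
    simp [Set.indicator]
  rw [e1, integral_fun_norm_addHaar volume ((Set.Iio R).indicator (fun t : ℝ => t ^ (-α))),
    finrank_euclideanSpace_fin, ← hV]
  have e2 : ∫ y in Set.Ioi (0:ℝ), y ^ (d - 1) • (Set.Iio R).indicator (fun t : ℝ => t ^ (-α)) y
      = R ^ ((d : ℝ) - α) / (d - α) := by
    have : ∀ y, y ^ (d - 1) • (Set.Iio R).indicator (fun t : ℝ => t ^ (-α)) y =
      (Set.Iio R).indicator (fun y : ℝ => y ^ (d - 1) • y ^ (-α)) y := by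
      intro y
      by_cases h : y < R <;> simp [h]
    simp_rw [this]
    rw [setIntegral_indicator measurableSet_Iio, Set.Ioi_inter_Iio,
      setIntegral_congr_fun measurableSet_Ioo key, ← integral_Ioc_eq_integral_Ioo,
      ← intervalIntegral.integral_of_le hR.le, integral_rpow (Or.inl (by linarith))]
    rw [show (d : ℝ) - 1 - α + 1 = d - α by ring, Real.zero_rpow hda.ne', sub_zero]
  rw [e2, nsmul_eq_mul, smul_eq_mul]
  have : 0 ≤ R ^ ((d : ℝ) - α) := by positivity
  have e3 : (d : ℝ) * (V * (R ^ ((d : ℝ) - α) / (d - α))) =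
    (d * V / (d - α)) * R ^ ((d : ℝ) - α) := by ring
  rw [e3]
  nlinarith

theorem aux_pot (d : ℕ) (hd : 1 ≤ d) (α : ℝ) (hα0 : 0 < α) (hα : α < d) :
    ∃ K : ℝ, 0 < K ∧ ∀ s > (0:ℝ), ∀ x w : EuclideanSpace ℝ (Fin d),
      ∫⁻ z, ENNReal.ofReal ((2 * π * s) ^ (-(d : ℝ) / 2) *
        Real.exp (-(1 / (2 * s)) * ‖z - x‖ ^ 2) * ‖w - z‖ ^ (-α)) ≤
        ENNReal.ofReal (K * s ^ (-α / 2)) := by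
  obtain ⟨K, hK, hKR⟩ := aux_riesz d hd α hα
  refine ⟨(2 * π) ^ (-(d : ℝ) / 2) * K + 1, by positivity, fun s hs x w => ?_⟩
  have hR : 0 < √s := Real.sqrt_pos.2 hs
  set c := (2 * π * s) ^ (-(d : ℝ) / 2) with hc
  have hc0 : 0 < c := by positivity
  have hpt : ∀ z, ENNReal.ofReal (c * Real.exp (-(1 / (2 * s)) * ‖z - x‖ ^ 2) * ‖w - z‖ ^ (-α)) ≤
      ENNReal.ofReal c * (Metric.ball (0 : EuclideanSpace ℝ (Fin d)) (√s)).indicator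
        (fun u => ENNReal.ofReal (‖u‖ ^ (-α))) (w - z) +
      ENNReal.ofReal (s ^ (-α / 2)) *
        ENNReal.ofReal (c * Real.exp (-(1 / (2 * s)) * ‖z - x‖ ^ 2)) := by
    intro z
    by_cases h : ‖w - z‖ < √s
    · rw [Set.indicator_of_mem (by simpa using h), ← ENNReal.ofReal_mul hc0.le]
      refine le_trans (ENNReal.ofReal_le_ofReal ?_) le_self_add
      have : Real.exp (-(1 / (2 * s)) * ‖z - x‖ ^ 2) ≤ 1 := by
        rw [Real.exp_le_one_iff]
        have : 0 ≤ (1 / (2 * s)) * ‖z - x‖ ^ 2 := by positivity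
        linarith
      have h2 : c * Real.exp (-(1 / (2 * s)) * ‖z - x‖ ^ 2) ≤ c := by nlinarith
      exact mul_le_mul_of_nonneg_right h2 (by positivity)
    · refine le_trans ?_ le_add_self
      rw [← ENNReal.ofReal_mul (by positivity), mul_comm]
      refine ENNReal.ofReal_le_ofReal (mul_le_mul_of_nonneg_right ?_ (by positivity))
      have : s ^ (-α / 2) = (√s) ^ (-α) := by
        rw [Real.sqrt_eq_rpow, ← Real.rpow_mul hs.le]; congr 1; ring
      rw [this]
      exact Real.rpow_le_rpow_of_nonpos hR (not_lt.1 h) (by linarith)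
  refine (lintegral_mono hpt).trans ?_
  rw [lintegral_add_right _ (by fun_prop), lintegral_const_mul' _ _ ENNReal.ofReal_ne_top,
    lintegral_const_mul' _ _ ENNReal.ofReal_ne_top, aux_prob d s hs x, mul_one,
    lintegral_sub_left_eq_self ((Metric.ball (0 : EuclideanSpace ℝ (Fin d)) (√s)).indicator
        (fun u => ENNReal.ofReal (‖u‖ ^ (-α)))) w, lintegral_indicator measurableSet_ball]
  grw [hKR _ hR]
  rw [← ENNReal.ofReal_mul hc0.le, ← ENNReal.ofReal_add (by positivity) (by positivity)]
  apply ENNReal.ofReal_le_ofReal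
  apply le_of_eq
  have h1 : (√s) ^ ((d : ℝ) - α) = s ^ ((d : ℝ) / 2) * s ^ (-α / 2) := by
    rw [Real.sqrt_eq_rpow, ← Real.rpow_mul hs.le, ← Real.rpow_add hs]; congr 1; ring
  have h2 : s ^ (-(d : ℝ) / 2) * s ^ ((d : ℝ) / 2) = 1 := by
    rw [← Real.rpow_add hs, show -(d : ℝ) / 2 + d / 2 = 0 by ring, Real.rpow_zero]
  rw [hc, Real.mul_rpow (by positivity) hs.le, h1]
  linear_combination ((2 * π) ^ (-(d : ℝ) / 2) * K * s ^ (-α / 2)) * h2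

theorem aux_exp (u v : ℝ) : |Real.exp (-u) - Real.exp (-v)| ≤ |u - v| * Real.exp (-min u v) := by
  wlog h : u ≤ v generalizing u v
  · have := this v u (le_of_not_ge h)
    rwa [abs_sub_comm, abs_sub_comm u v, min_comm]
  rw [min_eq_left h, abs_of_nonneg (by simpa using h), abs_of_nonpos (by linarith)]
  have h1 := Real.add_one_le_exp (u - v)
  have h2 : Real.exp (-v) = Real.exp (-u) * Real.exp (u - v) := by
    rw [← Real.exp_add]; congr 1; ring
  rw [h2]
  nlinarith [Real.exp_pos (-u)]

theorem aux_pt (a b δ : ℝ) (ha : 0 ≤ a) (hb : 0 ≤ b) (hδ : δ ≤ 1) (h : |a - b| ≤ δ) :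
    |Real.exp (-(a ^ 2 / 2)) - Real.exp (-(b ^ 2 / 2))| ≤ δ * 16 * Real.exp (-(a ^ 2 / 8)) := by
  have hδ0 : 0 ≤ δ := (abs_nonneg _).trans h
  obtain ⟨h1, h2⟩ := abs_le.1 h
  refine (aux_exp _ _).trans ?_
  have e1 : |a ^ 2 / 2 - b ^ 2 / 2| ≤ δ * (a + 1 / 2) := by
    rw [show a ^ 2 / 2 - b ^ 2 / 2 = (a - b) * ((a + b) / 2) by ring, abs_mul,
      abs_of_nonneg (show 0 ≤ (a + b) / 2 by linarith)]
    exact mul_le_mul h (by linarith) (by linarith) hδ0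
  have e2 : -min (a ^ 2 / 2) (b ^ 2 / 2) ≤ -(a ^ 2 / 8) + (-(a ^ 2 / 8) + 1 / 2) := by
    rw [neg_le]
    refine le_min ?_ ?_
    · nlinarith
    · have : a ^ 2 ≤ (b + 1) ^ 2 := by gcongr; linarith
      nlinarith [sq_nonneg (b - 1)]
  have e3 : Real.exp (1 / 2) ≤ 2 := by
    have h4 : Real.exp (1 / 2) * Real.exp (1 / 2) = Real.exp 1 := by
      rw [← Real.exp_add]; norm_num
    nlinarith [Real.exp_one_lt_d9, Real.exp_pos (1 / 2)]
  have e4 : (a + 1 / 2) * Real.exp (-(a ^ 2 / 8) + 1 / 2) ≤ 16 := by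
    rw [Real.exp_add]
    have h5 : (a + 1 / 2) * Real.exp (-(a ^ 2 / 8)) ≤ 8 := by
      rw [Real.exp_neg, ← div_eq_mul_inv, div_le_iff₀ (Real.exp_pos _)]
      nlinarith [Real.add_one_le_exp (a ^ 2 / 8), sq_nonneg (a - 1 / 2)]
    nlinarith [Real.exp_pos (1 / 2), Real.exp_pos (-(a ^ 2 / 8))]
  calc _ ≤ δ * (a + 1 / 2) * (Real.exp (-(a ^ 2 / 8)) * Real.exp (-(a ^ 2 / 8) + 1 / 2)) := by
        rw [← Real.exp_add]
        exact mul_le_mul e1 (Real.exp_le_exp.2 e2) (Real.exp_pos _).le (by positivity)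
    _ = δ * ((a + 1 / 2) * Real.exp (-(a ^ 2 / 8) + 1 / 2)) * Real.exp (-(a ^ 2 / 8)) := by ring
    _ ≤ _ := by gcongr

theorem aux_L1 (d : ℕ) :
    ∃ K : ℝ, 0 < K ∧ ∀ s > (0:ℝ), ∀ x y : EuclideanSpace ℝ (Fin d),
      ∫⁻ w, ENNReal.ofReal |(2 * π * s) ^ (-(d : ℝ) / 2) *
          Real.exp (-(1 / (2 * s)) * ‖w - x‖ ^ 2) - (2 * π * s) ^ (-(d : ℝ) / 2) *
          Real.exp (-(1 / (2 * s)) * ‖w - y‖ ^ 2)| ≤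
        ENNReal.ofReal (K * min 1 (‖x - y‖ / √s)) := by
  refine ⟨16 * 4 ^ ((d : ℝ) / 2) + 2, by positivity, fun s hs x y => ?_⟩
  have hR : 0 < √s := Real.sqrt_pos.2 hs
  set c := (2 * π * s) ^ (-(d : ℝ) / 2) with hc
  have hc0 : 0 < c := by positivity
  have h4 : (0:ℝ) < 4 ^ ((d : ℝ) / 2) := by positivity
  rcases le_total 1 (‖x - y‖ / √s) with h | h
  · rw [min_eq_left h]
    have : ∀ w, ENNReal.ofReal |c * Real.exp (-(1 / (2 * s)) * ‖w - x‖ ^ 2) -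
          c * Real.exp (-(1 / (2 * s)) * ‖w - y‖ ^ 2)| ≤
        ENNReal.ofReal (c * Real.exp (-(1 / (2 * s)) * ‖w - x‖ ^ 2)) +
        ENNReal.ofReal (c * Real.exp (-(1 / (2 * s)) * ‖w - y‖ ^ 2)) := by
      intro w
      rw [← ENNReal.ofReal_add (by positivity) (by positivity)]
      apply ENNReal.ofReal_le_ofReal
      refine (abs_sub _ _).trans (le_of_eq ?_)
      rw [abs_of_pos (by positivity), abs_of_pos (by positivity)]
    refine (lintegral_mono this).trans ?_
    rw [lintegral_add_right _ (by fun_prop), aux_prob d s hs, aux_prob d s hs,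
      ← ENNReal.ofReal_one, ← ENNReal.ofReal_add (by norm_num) (by norm_num)]
    apply ENNReal.ofReal_le_ofReal
    linarith
  · rw [min_eq_right h]
    set δ := ‖x - y‖ / √s with hδ
    have hδ0 : 0 ≤ δ := by positivity
    have : ∀ w, ENNReal.ofReal |c * Real.exp (-(1 / (2 * s)) * ‖w - x‖ ^ 2) -
          c * Real.exp (-(1 / (2 * s)) * ‖w - y‖ ^ 2)| ≤
        ENNReal.ofReal (c * (δ * 16)) *
        ENNReal.ofReal (Real.exp (-(1 / (8 * s)) * ‖w - x‖ ^ 2)) := by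
      intro w
      rw [← ENNReal.ofReal_mul (by positivity)]
      apply ENNReal.ofReal_le_ofReal
      rw [← mul_sub, abs_mul, abs_of_pos hc0, mul_assoc]
      refine mul_le_mul_of_nonneg_left ?_ hc0.le
      have := aux_pt (‖w - x‖ / √s) (‖w - y‖ / √s) δ (by positivity) (by positivity) h (by
        rw [← sub_div, abs_div, abs_of_pos hR, hδ]
        gcongr
        refine (abs_norm_sub_norm_le _ _).trans (le_of_eq ?_)
        rw [sub_sub_sub_cancel_left, norm_sub_rev])
      rw [div_pow, div_pow, Real.sq_sqrt hs.le] at this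
      have q2 : ∀ t : ℝ, -(1 / (2 * s)) * t = -(t / s / 2) := fun t => by field_simp
      have q8 : ∀ t : ℝ, -(1 / (8 * s)) * t = -(t / s / 8) := fun t => by field_simp
      rw [q2, q2, q8]
      exact this
    refine (lintegral_mono this).trans ?_
    rw [lintegral_const_mul' _ _ ENNReal.ofReal_ne_top, aux_gauss d _ (by positivity),
      ← ENNReal.ofReal_mul (by positivity)]
    apply ENNReal.ofReal_le_ofReal
    have h1 : (π / (1 / (8 * s))) ^ ((d : ℝ) / 2) =
        4 ^ ((d : ℝ) / 2) * (2 * π * s) ^ ((d : ℝ) / 2) := by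
      rw [← Real.mul_rpow (by norm_num) (by positivity)]
      congr 1; field_simp; norm_num
    have h2 : c * (2 * π * s) ^ ((d : ℝ) / 2) = 1 := by
      rw [hc, ← Real.rpow_add (by positivity), show -(d : ℝ) / 2 + d / 2 = 0 by ring,
        Real.rpow_zero]
    rw [h1]
    have h3 : c * (δ * 16) * (4 ^ ((d : ℝ) / 2) * (2 * π * s) ^ ((d : ℝ) / 2)) =
        16 * 4 ^ ((d : ℝ) / 2) * δ := by
      linear_combination (δ * 16 * 4 ^ ((d : ℝ) / 2)) * h2
    rw [h3]
    nlinarith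

/-- For `α ∈ (0,d)` there is `C = C(d,α) < ∞` such that for all `r > 0`
and `x, y ∈ ℝ^d`,
`∬ |p_r(w-x)-p_r(w-y)| |p_r(z-x)-p_r(z-y)| ‖w-z‖^{-α} dw dz
  ≤ C (ϰr)^{-α/2} min(1, ‖x-y‖/√(ϰr))`. -/
theorem stmt15 (d : ℕ) (hd : 1 ≤ d) (α ϰ : ℝ) (hα : α ∈ Set.Ioo (0:ℝ) (d:ℝ)) (hϰ : 0 < ϰ) :
    ∃ C : ℝ, 0 < C ∧ ∀ r > (0:ℝ), ∀ x y : EuclideanSpace ℝ (Fin d),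
      (∫⁻ w, ∫⁻ z, ENNReal.ofReal
          (|heatKernel d ϰ r (w - x) - heatKernel d ϰ r (w - y)| *
            |heatKernel d ϰ r (z - x) - heatKernel d ϰ r (z - y)| * ‖w - z‖ ^ (-α))) ≤
        ENNReal.ofReal (C * (ϰ * r) ^ (-α / 2) * min 1 (‖x - y‖ / Real.sqrt (ϰ * r))) := by
  obtain ⟨K₁, hK₁, H₁⟩ := aux_pot d hd α hα.1 hα.2
  obtain ⟨K₂, hK₂, H₂⟩ := aux_L1 d
  refine ⟨2 * K₁ * K₂, by positivity, fun r hr x y => ?_⟩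
  have hs : 0 < ϰ * r := mul_pos hϰ hr
  simp_rw [aux_hk]
  generalize ϰ * r = s at hs
  have H₁ := H₁ s hs
  have H₂ := H₂ s hs x y
  have hc0 : 0 < (2 * π * s) ^ (-(d : ℝ) / 2) := by positivity
  generalize (2 * π * s) ^ (-(d : ℝ) / 2) = c at *
  have hin : ∀ w : EuclideanSpace ℝ (Fin d), ∫⁻ z, ENNReal.ofReal
      (|c * Real.exp (-(1 / (2 * s)) * ‖w - x‖ ^ 2) -
          c * Real.exp (-(1 / (2 * s)) * ‖w - y‖ ^ 2)| *
        |c * Real.exp (-(1 / (2 * s)) * ‖z - x‖ ^ 2) -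
          c * Real.exp (-(1 / (2 * s)) * ‖z - y‖ ^ 2)| * ‖w - z‖ ^ (-α)) ≤
      ENNReal.ofReal |c * Real.exp (-(1 / (2 * s)) * ‖w - x‖ ^ 2) -
          c * Real.exp (-(1 / (2 * s)) * ‖w - y‖ ^ 2)| *
        ENNReal.ofReal (2 * K₁ * s ^ (-α / 2)) := by
    intro w
    simp_rw [mul_assoc |c * Real.exp (-(1 / (2 * s)) * ‖w - x‖ ^ 2) -
          c * Real.exp (-(1 / (2 * s)) * ‖w - y‖ ^ 2)|, ENNReal.ofReal_mul (abs_nonneg _)]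
    rw [lintegral_const_mul' _ _ ENNReal.ofReal_ne_top]
    gcongr
    have : ∀ z, ENNReal.ofReal |c * Real.exp (-(1 / (2 * s)) * ‖z - x‖ ^ 2) -
          c * Real.exp (-(1 / (2 * s)) * ‖z - y‖ ^ 2)| * ENNReal.ofReal (‖w - z‖ ^ (-α)) ≤
        ENNReal.ofReal (c * Real.exp (-(1 / (2 * s)) * ‖z - x‖ ^ 2) * ‖w - z‖ ^ (-α)) +
        ENNReal.ofReal (c * Real.exp (-(1 / (2 * s)) * ‖z - y‖ ^ 2) * ‖w - z‖ ^ (-α)) := by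
      intro z
      rw [← ENNReal.ofReal_add (by positivity) (by positivity),
        ← ENNReal.ofReal_mul (abs_nonneg _), ← add_mul]
      apply ENNReal.ofReal_le_ofReal
      refine mul_le_mul_of_nonneg_right ?_ (by positivity)
      refine (abs_sub _ _).trans (le_of_eq ?_)
      rw [abs_of_pos (by positivity), abs_of_pos (by positivity)]
    refine (lintegral_mono this).trans ?_
    rw [lintegral_add_right _ (by fun_prop)]
    refine (add_le_add (H₁ x w) (H₁ y w)).trans (le_of_eq ?_)
    rw [← ENNReal.ofReal_add (by positivity) (by positivity)]
    congr 1; ring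
  refine (lintegral_mono hin).trans ?_
  rw [lintegral_mul_const' _ _ ENNReal.ofReal_ne_top]
  refine (mul_le_mul_left H₂ _).trans (le_of_eq ?_)
  rw [← ENNReal.ofReal_mul (by positivity)]
  congr 1; ring
end
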